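/- arXiv:1003.3283 — 2 statements merged into one kernel-verified Lean document; each statement's English description precedes it below -/
import Mathlib

section
/- Let α ∈ Δ̃_min. If the invariant subspace V_α = {v ∈ V : f_α(v) = v} is contained in some hyperplane H belonging to H_q, then H is not a wall of the alcove A; that is, V_α is not contained in any of the hyperplanes H_β = {λ ∈ V : ⟨β,λ⟩ = m_β} for β ∈ Δ̃, where m_β = 0 for β ∈ Δ and m_{−α₀} = −1. (Indeed, the point λ^α ∈ A whose affine coordinates are 1/|⟨z_α⟩·β| on the ⟨z_α⟩-orbit of β and 0 on Δ̃ outside this orbit satisfies f_α(λ^α) = λ^α and λ^α ∉ H_β.) -/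
open scoped BigOperators

/-- Context: an irreducible reduced crystallographic root system `Φ ⊂ V*`, encoded through the
data attached to its extended Dynkin diagram `Δ̃` (indexed by `Dt`, with affine node `a0 = −α₀`):
marks `mark = n_β`, simple roots `srt β` (with `srt a0 = −α₀`), fundamental coweights
`omega β = ω_β∨` (with `omega a0 = 0`), affine coordinates `coord`, the Weyl group `W`,
the elements `z_α = zlin α` together with the permutation `zperm α` they induce on `Δ̃`,
the lattices `Q∨ = Qv ⊆ Y ⊆ P∨ = Pv`, the set `roots = Φ` of roots (as linear forms), and
the Frobenius data `q = p^m`, diagram automorphism `rho`, and linear isometry `F0`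
(so that `F = q·F0`). -/
structure AlcoveCtx (V : Type) [AddCommGroup V] [Module ℚ V]
    (Dt : Type) [Fintype Dt] [DecidableEq Dt] : Type where
  /-- the affine node `−α₀` of `Δ̃` -/
  a0 : Dt
  /-- the marks `n_β` (coefficients of the highest root, `n_{−α₀} = 1`) -/
  mark : Dt → ℕ
  mark_pos : ∀ b, 0 < mark b
  mark_a0 : mark a0 = 1
  /-- the roots indexed by `Δ̃`: for `b ≠ a0` the simple root `b`, and `srt a0 = −α₀` -/
  srt : Dt → (V →ₗ[ℚ] ℚ)
  /-- the fundamental coweights `ω_β∨`, with `ω_{−α₀}∨ = 0` -/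
  omega : Dt → V
  omega_a0 : omega a0 = 0
  /-- `⟨α, ω_β∨⟩ = δ_{αβ}` for `α, β ∈ Δ` -/
  pairing : ∀ b c, b ≠ a0 → c ≠ a0 → srt b (omega c) = (if b = c then (1 : ℚ) else 0)
  /-- `−α₀ = −Σ_{α∈Δ} n_α α` -/
  srt_a0 : srt a0 = - ∑ b ∈ Finset.univ.erase a0, (mark b : ℚ) • srt b
  /-- `(ω_α∨)_{α∈Δ}` is a basis of `V`, dual to `Δ` -/
  expansion : ∀ v : V, v = ∑ b ∈ Finset.univ.erase a0, srt b v • omega b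
  /-- the affine coordinates `(λ_β)_{β∈Δ̃}` -/
  coord : V → Dt → ℚ
  coord_def : ∀ v b, coord v b =
    if b = a0 then 1 + srt a0 v else (mark b : ℚ) * srt b v
  /-- `z_α = w_α w₀ ∈ W` (trivial for `α = −α₀`), as a linear automorphism of `V` -/
  zlin : Dt → (V ≃ₗ[ℚ] V)
  zlin_a0 : zlin a0 = LinearEquiv.refl ℚ V
  /-- the permutation of `Δ̃` induced by `z_α` -/
  zperm : Dt → Equiv.Perm Dt
  zperm_a0 : zperm a0 = 1
  /-- `f_α = z_α + ω_α∨` permutes the affine coordinates according to `z_α`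
  (for `α ∈ Δ̃_min`) -/
  coord_f : ∀ a, mark a = 1 → ∀ v b,
    coord (zlin a v + omega a) b = coord v ((zperm a)⁻¹ b)
  /-- the set `Φ` of roots, as linear forms on `V` -/
  roots : Set (V →ₗ[ℚ] ℚ)
  srt_mem_roots : ∀ b, b ≠ a0 → srt b ∈ roots
  /-- the Weyl group `W`, acting linearly on `V` -/
  W : Subgroup (V ≃ₗ[ℚ] V)
  zlin_mem_W : ∀ a, zlin a ∈ W
  /-- the coroot lattice `Q∨ = ℤΦ∨` -/
  Qv : AddSubgroup V
  /-- the coweight lattice `P∨` -/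
  Pv : AddSubgroup V
  /-- an intermediate `W`-stable lattice `Q∨ ⊆ Y ⊆ P∨` -/
  Y : AddSubgroup V
  Qv_le_Y : Qv ≤ Y
  Y_le_Pv : Y ≤ Pv
  omega_mem_Pv : ∀ b, omega b ∈ Pv
  W_stab_Qv : ∀ w ∈ W, ∀ y ∈ Qv, w y ∈ Qv
  W_stab_Y : ∀ w ∈ W, ∀ y ∈ Y, w y ∈ Y
  /-- the characteristic `p` -/
  p : ℕ
  p_prime : p.Prime
  m : ℕ
  m_pos : 0 < m
  /-- the prime power `q = p^m` -/
  q : ℕ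
  q_eq : q = p ^ m
  /-- the diagram automorphism `ρ` of `Δ`, extended to `Δ̃` fixing `−α₀` -/
  rho : Equiv.Perm Dt
  rho_a0 : rho a0 = a0
  rho_mark : ∀ b, mark (rho b) = mark b
  /-- the linear isometry `F₀` of `V` with `F₀(ω_α∨) = ω_{ρ⁻¹(α)}∨` -/
  F0 : V ≃ₗ[ℚ] V
  F0_omega : ∀ b, F0 (omega b) = omega (rho⁻¹ b)

namespace AlcoveCtx

variable {V : Type} [AddCommGroup V] [Module ℚ V]
variable {Dt : Type} [Fintype Dt] [DecidableEq Dt]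
variable (C : AlcoveCtx V Dt)

/-- the fundamental alcove `A = {λ : ⟨α,λ⟩ ≥ 0 ∀ α∈Δ, ⟨α₀,λ⟩ ≤ 1}` -/
def alcove : Set V :=
  {v | (∀ b, b ≠ C.a0 → 0 ≤ C.srt b v) ∧ -(C.srt C.a0 v) ≤ 1}

/-- the affine transformation `f_α = z_α + ω_α∨` -/
def f (a : Dt) : V → V := fun v => C.zlin a v + C.omega a

/-- `f_α` as an affine automorphism of `V` -/
def fE (a : Dt) : V ≃ᵃ[ℚ] V :=
  (C.zlin a).toAffineEquiv.trans (AffineEquiv.constVAdd ℚ V (C.omega a))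

/-- the invariant subspace `V_α = {v : f_α(v) = v}` -/
def Vfix (a : Dt) : Set V := {v | C.f a v = v}

/-- the dimension of `V_α` (as an affine subspace) -/
noncomputable def vdim (a : Dt) : ℕ := Module.finrank ℚ (vectorSpan ℚ (C.Vfix a))

/-- the Frobenius `F = q·F₀` -/
def Fm : V → V := fun v => (C.q : ℚ) • C.F0 v

/-- the inverse `F⁻¹ = (1/q)·F₀⁻¹` of the Frobenius -/
def Fi : V → V := fun v => ((C.q : ℚ))⁻¹ • C.F0.symm v

/-- the alcove `A_q = F⁻¹(A)` of the affine Weyl group `W_{a,q}` -/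
def Aq : Set V := C.Fm ⁻¹' C.alcove

/-- membership in `W_{a,q} = F⁻¹(Q∨) ⋊ W`: `g = (translation by t) ∘ w` with
`w ∈ W` and `F(t) ∈ Q∨` -/
def isWaq (g : V ≃ᵃ[ℚ] V) : Prop :=
  ∃ w ∈ C.W, ∃ t : V, C.Fm t ∈ C.Qv ∧ ∀ v, g v = w v + t

/-- membership in `E_q = {ω ∈ W_{a,q} : ω(A_q) ⊆ A}` -/
def inEq (g : V ≃ᵃ[ℚ] V) : Prop := C.isWaq g ∧ ⇑g '' C.Aq ⊆ C.alcove

/-- the set `H_q` of reflecting hyperplanes of the affine reflections of `W_{a,q}`: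
the hyperplanes `{v : α(v) = k/q}` for `α ∈ Φ` and `k ∈ ℤ` -/
def Hq : Set (Set V) :=
  {H | ∃ φ ∈ C.roots, ∃ k : ℤ, H = {v : V | φ v = (k : ℚ) / (C.q : ℚ)}}

/-- `f_{α,q} = z_{ρ(α)} + (1/q) ω_{ρ(α)}∨` -/
def fq (a : Dt) : V → V :=
  fun v => C.zlin (C.rho a) v + ((C.q : ℚ))⁻¹ • C.omega (C.rho a)

/-- the `W̄_a`-orbit of a point, where `W̄_a = Y ⋊ W` -/
def orbitOf (x : V) : Set V := {y | ∃ w ∈ C.W, ∃ t ∈ C.Y, y = w x + t}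

/-- the subset `ℚ_{p'} ⊗_ℤ Y` of `V` -/
def QpY : Set V := {v | ∃ k : ℕ, 0 < k ∧ ¬ C.p ∣ k ∧ k • v ∈ C.Y}

/-- `α ∈ Δ̃_{min,G}`, i.e. `n_α = 1` and `z_α ∈ 𝒜_G` (equivalently `ω_α∨ ∈ Y`) -/
def minG (a : Dt) : Prop := C.mark a = 1 ∧ C.omega a ∈ C.Y

/-- the `Γ_G`-orbit of a point, where `Γ_G = {f_α : α ∈ Δ̃_{min,G}}` -/
def gammaOrbit (x : V) : Set V := {y | ∃ b, C.minG b ∧ y = C.f b x}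

end AlcoveCtx

/-!
The affine coordinates identify `V` with the hyperplane `∑ β, x β = 1` of `Dt → ℚ`. There `f_α`,
for `α ∈ Δ̃_min`, acts by permuting coordinates, while the walls of `A` are the coordinate
hyperplanes `x β = 0`. The point with all coordinates equal, which is the barycenter of the
vertices `ω_β∨ / n_β` of `A`, is therefore fixed by every such `f_α` and lies on no wall. A single
point thus does the work of the points `λ^α`, which depend on `α` and on an orbit of `⟨z_α⟩`.
-/

namespace AlcoveCtx

variable {V : Type} [AddCommGroup V] [Module ℚ V]
variable {Dt : Type} [Fintype Dt] [DecidableEq Dt]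
variable (C : AlcoveCtx V Dt)

/-- The hyperplane `H_β = {λ : ⟨β,λ⟩ = m_β}` supporting the facet of the alcove `A` attached to
`β ∈ Δ̃`, with `m_β = 0` for `β ∈ Δ` and `m_{−α₀} = −1`. -/
def wall (b : Dt) : Set V := {v | C.srt b v = if b = C.a0 then (-1 : ℚ) else 0}

/-- The point `∑_β (x_β / n_β) ω_β∨` of `V`. It has affine coordinates `x` when `∑_β x_β = 1`;
the entry `x a0` does not contribute to the sum, because `ω_{−α₀}∨ = 0`. -/
def ofCoord (x : Dt → ℚ) : V := ∑ b, (x b / C.mark b) • C.omega b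

/-- The point of `V` whose affine coordinates are all equal, i.e. the barycenter of the vertices
of the alcove `A`. -/
def barycenter : V := C.ofCoord fun _ => (Fintype.card Dt : ℚ)⁻¹

variable {C}

lemma mark_ne_zero (b : Dt) : (C.mark b : ℚ) ≠ 0 :=
  Nat.cast_ne_zero.mpr (C.mark_pos b).ne'

lemma coord_a0 (v : V) : C.coord v C.a0 = 1 + C.srt C.a0 v := by
  rw [C.coord_def, if_pos rfl]

lemma coord_of_ne {b : Dt} (hb : b ≠ C.a0) (v : V) :
    C.coord v b = C.mark b * C.srt b v := by
  rw [C.coord_def, if_neg hb]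

lemma sum_coord (v : V) : ∑ b, C.coord v b = 1 := by
  have sum_simple : ∑ b ∈ Finset.univ.erase C.a0, C.coord v b = -C.srt C.a0 v := by
    simp only [C.srt_a0, LinearMap.neg_apply, LinearMap.sum_apply, LinearMap.smul_apply,
      smul_eq_mul, neg_neg]
    exact Finset.sum_congr rfl fun b hb => coord_of_ne (Finset.ne_of_mem_erase hb) v
  rw [← Finset.add_sum_erase _ _ (Finset.mem_univ C.a0), sum_simple, coord_a0]
  ring

lemma coord_injective : Function.Injective C.coord := by
  intro v w h
  rw [C.expansion v, C.expansion w]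
  refine Finset.sum_congr rfl fun b hb => ?_
  have hb' : b ≠ C.a0 := Finset.ne_of_mem_erase hb
  have hsrt : (C.mark b : ℚ) * C.srt b v = C.mark b * C.srt b w := by
    rw [← coord_of_ne hb', ← coord_of_ne hb', h]
  rw [mul_left_cancel₀ (mark_ne_zero b) hsrt]

lemma srt_omega {b : Dt} (hb : b ≠ C.a0) (c : Dt) :
    C.srt b (C.omega c) = if b = c then 1 else 0 := by
  rcases eq_or_ne c C.a0 with rfl | hc
  · rw [C.omega_a0, map_zero, if_neg hb]
  · exact C.pairing b c hb hc

lemma srt_ofCoord {b : Dt} (hb : b ≠ C.a0) (x : Dt → ℚ) :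
    C.srt b (C.ofCoord x) = x b / C.mark b := by
  simp [ofCoord, srt_omega hb]

lemma coord_ofCoord {x : Dt → ℚ} (hx : ∑ b, x b = 1) : C.coord (C.ofCoord x) = x := by
  have coord_simple {b : Dt} (hb : b ≠ C.a0) : C.coord (C.ofCoord x) b = x b := by
    rw [coord_of_ne hb, srt_ofCoord hb, mul_div_cancel₀ _ (mark_ne_zero b)]
  funext b
  rcases eq_or_ne b C.a0 with rfl | hb
  · have hsum : ∑ b, C.coord (C.ofCoord x) b = ∑ b, x b := (sum_coord _).trans hx.symm
    rw [← Finset.add_sum_erase _ _ (Finset.mem_univ C.a0),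
      ← Finset.add_sum_erase _ x (Finset.mem_univ C.a0),
      Finset.sum_congr rfl fun b hb => coord_simple (Finset.ne_of_mem_erase hb)] at hsum
    exact add_right_cancel hsum
  · exact coord_simple hb

lemma mem_Vfix_iff {a : Dt} (ha : C.mark a = 1) {v : V} :
    v ∈ C.Vfix a ↔ ∀ b, C.coord v ((C.zperm a)⁻¹ b) = C.coord v b := by
  change C.f a v = v ↔ _
  rw [← (coord_injective (C := C)).eq_iff, funext_iff]
  exact forall_congr' fun b => by rw [f, C.coord_f a ha]

lemma mem_wall_iff {b : Dt} {v : V} : v ∈ C.wall b ↔ C.coord v b = 0 := by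
  change C.srt b v = _ ↔ _
  rcases eq_or_ne b C.a0 with rfl | hb
  · rw [if_pos rfl, coord_a0, add_comm, ← eq_neg_iff_add_eq_zero]
  · rw [if_neg hb, coord_of_ne hb, mul_eq_zero_iff_left (mark_ne_zero b)]

lemma card_ne_zero (C : AlcoveCtx V Dt) : (Fintype.card Dt : ℚ) ≠ 0 :=
  have : Nonempty Dt := ⟨C.a0⟩
  Nat.cast_ne_zero.mpr Fintype.card_ne_zero

lemma coord_barycenter (b : Dt) : C.coord C.barycenter b = (Fintype.card Dt : ℚ)⁻¹ := by
  have hsum : ∑ _b : Dt, (Fintype.card Dt : ℚ)⁻¹ = 1 := by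
    rw [Finset.sum_const, Finset.card_univ, nsmul_eq_mul, mul_inv_cancel₀ C.card_ne_zero]
  exact congrFun (coord_ofCoord hsum) b

lemma barycenter_mem_Vfix {a : Dt} (ha : C.mark a = 1) : C.barycenter ∈ C.Vfix a :=
  (mem_Vfix_iff ha).mpr fun b => by rw [coord_barycenter, coord_barycenter]

lemma barycenter_notMem_wall (b : Dt) : C.barycenter ∉ C.wall b := by
  rw [mem_wall_iff, coord_barycenter]
  exact inv_ne_zero C.card_ne_zero

lemma not_Vfix_subset_wall {a : Dt} (ha : C.mark a = 1) (b : Dt) : ¬ C.Vfix a ⊆ C.wall b :=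
  fun hsub => barycenter_notMem_wall b (hsub (barycenter_mem_Vfix ha))

end AlcoveCtx

/-- For `α ∈ Δ̃_min`: if the invariant subspace `V_α` is contained in some
hyperplane `H ∈ H_q`, then `H` is not a wall of the alcove `A`; that is, `V_α` is not contained
in any of the hyperplanes `H_β = {λ : ⟨β,λ⟩ = m_β}` for `β ∈ Δ̃`, where `m_β = 0` for `β ∈ Δ`
and `m_{−α₀} = −1`. -/
theorem statement2 {V Dt : Type} [AddCommGroup V] [Module ℚ V]
    [Fintype Dt] [DecidableEq Dt] (C : AlcoveCtx V Dt) (a : Dt) (ha : C.mark a = 1) :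
    (∀ H ∈ C.Hq, C.Vfix a ⊆ H →
      ∀ b : Dt, H ≠ {v : V | C.srt b v = (if b = C.a0 then (-1 : ℚ) else 0)}) ∧
    (∀ b : Dt, ¬ (C.Vfix a ⊆ {v : V | C.srt b v = (if b = C.a0 then (-1 : ℚ) else 0)})) := by
  refine ⟨?_, AlcoveCtx.not_Vfix_subset_wall ha⟩
  rintro H - hH b rfl
  exact AlcoveCtx.not_Vfix_subset_wall ha b hH
end

section
/- Let H = GC be a finite central product, i.e. G and C are subgroups of the finite group H with H = GC, every element of G commuting with every element of C, and Z = G ∩ C. Assume C is abelian, and let τ be an automorphism of H with τ(G) = G and τ(C) = C. Let χ be a τ-invariant complex irreducible character of G, and let ν ∈ Irr(Z) be the character with Res_Z(χ) = χ(1)·ν. If ν extends to a τ-invariant linear character of C, then the number of τ-invariant irreducible characters of H lying over χ (i.e. θ ∈ Irr(H) with ⟨Res_G(θ), χ⟩ ≠ 0 and θ∘τ = θ) equals the number of τ-fixed elements of the quotient group C/Z: |Irr(H | χ)^τ| = |(C/Z)^τ|. -/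
open scoped BigOperators

/-- The set of irreducible complex characters of a finite group `G`: the characters of the
simple objects of `FDRep ℂ G`. -/
noncomputable def IrrChar (G : Type) [Group G] : Set (G → ℂ) :=
  {χ | ∃ ρ : FDRep ℂ G, CategoryTheory.Simple ρ ∧ χ = ρ.character}

/-!
`C` is central in `H`, so it acts by scalars in every irreducible representation of `H`. Hence
such a representation stays irreducible on `G`, and the irreducible characters of `H` over `χ` are
the dot products `χ • μ`, where `μ` runs over the linear characters of `C` extending `ν`; since `χ`
is `τ`-invariant, `χ • μ` is `τ`-invariant exactly when `μ` is. Dividing by one `τ`-invariant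
extension turns these `μ` into the `τ`-invariant characters of `C/Z`. These are the characters
trivial on the image of `x ↦ τ(x)x⁻¹`, so their number is the index of that image, which is the
order of the kernel, the group of `τ`-fixed elements of `C/Z`.
-/

section Representation

open Representation

universe u

theorem isSimpleModule_of_algebraMap_end_surjective {k R M : Type*} [Field k] [Ring R]
    [Algebra k R] [AddCommGroup M] [Module k M] [Module R M] [IsScalarTower k R M]
    [IsSemisimpleModule R M] [Nontrivial M]
    (h : Function.Surjective (algebraMap k (Module.End R M))) : IsSimpleModule R M where
  eq_bot_or_eq_top W := by
    obtain ⟨W', hW⟩ := exists_isCompl W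
    obtain ⟨c, hc⟩ := h (W.projection W' hW)
    have hproj (x : M) : W.projection W' hW x = c • x := by rw [← hc, Module.algebraMap_end_apply]
    rcases eq_or_ne c 0 with rfl | hc0
    · refine .inl (W.eq_bot_iff.2 fun x hx => ?_)
      rw [← Submodule.projection_apply_of_mem_left hW hx, hproj, zero_smul]
    · refine .inr (W.eq_top_iff'.2 fun x => ?_)
      have hx : c • x ∈ W := hproj x ▸ Submodule.projection_apply_mem hW x
      simpa [hc0] using W.smul_of_tower_mem c⁻¹ hx

theorem isIrreducible_iff_finrank_intertwiningMap_self {k G V : Type*} [Field k] [IsAlgClosed k]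
    [Group G] [Finite G] [NeZero (Nat.card G : k)] [AddCommGroup V] [Module k V]
    [FiniteDimensional k V] (ρ : Representation k G V) :
    IsIrreducible ρ ↔ Module.finrank k (IntertwiningMap ρ ρ) = 1 := by
  refine ⟨fun _ => IsIrreducible.finrank_intertwiningMap_self ρ, fun h => ?_⟩
  rw [(IntertwiningMap.equivAlgEnd (ρ := ρ)).toLinearEquiv.finrank_eq] at h
  rw [irreducible_iff_isSimpleModule_asModule]
  have : Nontrivial (Module.End (MonoidAlgebra k G) ρ.asModule) :=
    Module.nontrivial_of_finrank_eq_succ h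
  have : Nontrivial ρ.asModule := by
    by_contra!
    exact not_subsingleton (Module.End (MonoidAlgebra k G) ρ.asModule) inferInstance
  exact isSimpleModule_of_algebraMap_end_surjective
    (Algebra.finrank_eq_one_iff_bijective_algebraMap.1 h).surjective

theorem simple_iff_isIrreducible {k G : Type u} [Field k] [IsAlgClosed k] [Group G] [Finite G]
    [NeZero (Nat.card G : k)] (V : FDRep k G) : CategoryTheory.Simple V ↔ IsIrreducible V.ρ := by
  rw [FDRep.simple_iff_end_is_rank_one, ← (linHom.invariantsEquivFDRepHom V V).finrank_eq,
    (invariantsEquivIntertwiningMap V.ρ V.ρ).finrank_eq,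
    isIrreducible_iff_finrank_intertwiningMap_self]

/-- If every operator `σ h` is a scalar multiple of some `σ (f g)`, then `σ` and its pullback
along `f` have the same subrepresentations. -/
def subrepresentationCompOrderIso {k G H V : Type*} [CommSemiring k] [Monoid G] [Monoid H]
    [AddCommMonoid V] [Module k V] (σ : Representation k H V) (f : G →* H)
    (hf : ∀ h, ∃ (g : G) (a : k), σ h = a • σ (f g)) :
    Subrepresentation (σ.comp f : Representation k G V) ≃o Subrepresentation σ where
  toFun W := ⟨W.toSubmodule, fun h v hv => by
    obtain ⟨g, a, hga⟩ := hf h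
    rw [hga]
    exact W.toSubmodule.smul_mem a (W.apply_mem_toSubmodule g hv)⟩
  invFun W := ⟨W.toSubmodule, fun g _ hv => W.apply_mem_toSubmodule (f g) hv⟩
  left_inv _ := rfl
  right_inv _ := rfl
  map_rel_iff' := Iff.rfl

theorem nontrivial_of_isIrreducible {k G V : Type*} [Field k] [Monoid G] [AddCommGroup V]
    [Module k V] (ρ : Representation k G V) [IsIrreducible ρ] : Nontrivial V :=
  (Submodule.nontrivial_iff k).1 (Subrepresentation.toSubmodule_injective (ρ := ρ)).nontrivial

theorem character_one_ne_zero {k G V : Type*} [Field k] [CharZero k] [Monoid G] [AddCommGroup V]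
    [Module k V] [FiniteDimensional k V] (ρ : Representation k G V) [IsIrreducible ρ] :
    ρ.character 1 ≠ 0 := by
  have : Nontrivial V := nontrivial_of_isIrreducible ρ
  rw [char_one, Nat.cast_ne_zero]
  exact Module.finrank_pos.ne'

theorem exists_central_character {k G V : Type*} [Field k] [IsAlgClosed k] [Group G]
    [AddCommGroup V] [Module k V] [FiniteDimensional k V] (ρ : Representation k G V)
    [IsIrreducible ρ] :
    ∃ ω : Subgroup.center G →* kˣ, ∀ z : Subgroup.center G, ρ z = (ω z : k) • 1 := by
  have : Nontrivial V := nontrivial_of_isIrreducible ρ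
  have schur (z : Subgroup.center G) : ∃ a : k, ρ z = algebraMap k (Module.End k V) a := by
    obtain ⟨a, ha⟩ :=
      (IsIrreducible.algebraMap_intertwiningMap_bijective_of_isAlgClosed (ρ := ρ)).surjective
        (IntertwiningMap.centralMul ρ z z.2)
    exact ⟨a, congrArg IntertwiningMap.toLinearMap ha.symm⟩
  choose a ha using schur
  have inj := (algebraMap k (Module.End k V)).injective
  let ω : Subgroup.center G →* k :=
    { toFun := a
      map_one' := inj (by rw [← ha, Subgroup.coe_one, map_one, map_one])
      map_mul' := fun x y => inj (by rw [← ha, Subgroup.coe_mul, map_mul, map_mul, ha, ha]) }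
  exact ⟨ω.toHomUnits, fun z => (ha z).trans (Algebra.algebraMap_eq_smul_one _)⟩

theorem map_eq_smul_one_of_character_eq {k G V : Type*} [Field k] [IsAlgClosed k] [CharZero k]
    [Group G] [AddCommGroup V] [Module k V] [FiniteDimensional k V] (ρ : Representation k G V)
    [IsIrreducible ρ] {z : G} (hz : z ∈ Subgroup.center G) {a : k}
    (ha : ρ.character z = ρ.character 1 * a) : ρ z = a • 1 := by
  obtain ⟨ω, hω⟩ := exists_central_character ρ
  have hρz : ρ z = (ω ⟨z, hz⟩ : k) • 1 := hω ⟨z, hz⟩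
  have htrace : ρ.character 1 * (ω ⟨z, hz⟩ : k) = ρ.character 1 * a := by
    rw [← ha, character, character, hρz, map_one, map_smul, smul_eq_mul, mul_comm]
  rw [hρz, mul_left_cancel₀ (character_one_ne_zero ρ) htrace]

end Representation

section UnitaryTrick

open Matrix ComplexOrder

theorem exists_posDef_conjTranspose_mul_mul_eq {𝕜 G n : Type*} [RCLike 𝕜] [Group G] [Finite G]
    [Fintype n] [DecidableEq n] (M : G →* Matrix n n 𝕜) :
    ∃ P : Matrix n n 𝕜, P.PosDef ∧ ∀ g, (M g)ᴴ * P * M g = P := by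
  have := Fintype.ofFinite G
  refine ⟨∑ x, (M x)ᴴ * M x, posDef_sum Finset.univ_nonempty fun x _ =>
    .conjTranspose_mul_self _ ?_, fun g => ?_⟩
  · exact mulVec_injective_of_isUnit ((Group.isUnit x).map M)
  · rw [Finset.mul_sum, Finset.sum_mul]
    refine Fintype.sum_equiv (Equiv.mulRight g) _ _ fun x => ?_
    simp [conjTranspose_mul, Matrix.mul_assoc]

theorem trace_map_inv_eq_star {𝕜 G n : Type*} [RCLike 𝕜] [Group G] [Finite G] [Fintype n]
    [DecidableEq n] (M : G →* Matrix n n 𝕜) (g : G) : (M g⁻¹).trace = star (M g).trace := by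
  obtain ⟨P, hP, hinv⟩ := exists_posDef_conjTranspose_mul_mul_eq M
  have hdet : IsUnit P.det := (isUnit_iff_isUnit_det P).1 hP.isUnit
  have hconj : (M g)ᴴ * P = P * M g⁻¹ := by
    nth_rw 2 [← hinv g]
    rw [Matrix.mul_assoc, ← map_mul, mul_inv_cancel, map_one, Matrix.mul_one]
  rw [← trace_conjTranspose, ← Matrix.mul_one (M g)ᴴ, ← mul_nonsing_inv P hdet, ← Matrix.mul_assoc,
    hconj, trace_mul_comm, ← Matrix.mul_assoc, nonsing_inv_mul P hdet, Matrix.one_mul]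

theorem character_inv_eq_star {𝕜 G V : Type*} [RCLike 𝕜] [Group G] [Finite G] [AddCommGroup V]
    [Module 𝕜 V] [FiniteDimensional 𝕜 V] (ρ : Representation 𝕜 G V) (g : G) :
    ρ.character g⁻¹ = star (ρ.character g) := by
  let b := Module.finBasis 𝕜 V
  simp only [Representation.character, LinearMap.trace_eq_matrix_trace 𝕜 b]
  exact trace_map_inv_eq_star ((LinearMap.toMatrixAlgEquiv b).toMulEquiv.toMonoidHom.comp ρ) g

end UnitaryTrick

section IrrChar

open Representation

theorem mem_irrChar_iff {G : Type} [Group G] [Finite G] {χ : G → ℂ} :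
    χ ∈ IrrChar G ↔ ∃ (V : Type) (_ : AddCommGroup V) (_ : Module ℂ V) (_ : FiniteDimensional ℂ V)
      (ρ : Representation ℂ G V), IsIrreducible ρ ∧ χ = ρ.character := by
  constructor
  · rintro ⟨V, hV, rfl⟩
    exact ⟨V, _, _, inferInstance, V.ρ, (simple_iff_isIrreducible V).1 hV, rfl⟩
  · rintro ⟨V, _, _, _, ρ, hρ, rfl⟩
    exact ⟨FDRep.of ρ, (simple_iff_isIrreducible (FDRep.of ρ)).2 hρ, rfl⟩

theorem apply_one_ne_zero_of_mem_irrChar {G : Type} [Group G] [Finite G] {χ : G → ℂ}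
    (hχ : χ ∈ IrrChar G) : χ 1 ≠ 0 := by
  obtain ⟨V, _, _, _, ρ, hρ, rfl⟩ := mem_irrChar_iff.1 hχ
  exact character_one_ne_zero ρ

theorem sum_mul_conj_ne_zero_iff {G : Type} [Group G] [Fintype G] {ψ χ : G → ℂ}
    (hψ : ψ ∈ IrrChar G) (hχ : χ ∈ IrrChar G) :
    ∑ g, ψ g * (starRingEnd ℂ) (χ g) ≠ 0 ↔ ψ = χ := by
  obtain ⟨V, _, _, _, ρ, hρ, rfl⟩ := mem_irrChar_iff.1 hψ
  obtain ⟨W, _, _, _, σ, hσ, rfl⟩ := mem_irrChar_iff.1 hχ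
  have hcard : (Nat.card G : ℂ) ≠ 0 := NeZero.ne _
  have := invertibleOfNonzero hcard
  simp only [starRingEnd_apply, ← character_inv_eq_star]
  constructor
  · intro hne
    by_contra hρσ
    have hiso : ¬ Nonempty (σ.Equiv ρ) := fun ⟨e⟩ => hρσ (char_iso e).symm
    have horth := char_orthonormal ρ σ
    rw [if_neg hiso] at horth
    exact mul_ne_zero (inv_ne_zero hcard) hne horth
  · intro h hsum
    have horth := char_orthonormal σ σ
    rw [h] at hsum
    rw [if_pos ⟨.refl _⟩, hsum, mul_zero] at horth
    exact zero_ne_one horth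

end IrrChar

/-- `H` is the central product `GC` of its subgroups `G` and `C`. -/
structure IsCentralProduct {H : Type*} [Group H] (G C : Subgroup H) : Prop where
  commute : ∀ g ∈ G, ∀ c ∈ C, Commute g c
  exists_mul_eq : ∀ h, ∃ g ∈ G, ∃ c ∈ C, g * c = h

namespace IsCentralProduct

variable {H : Type*} [Group H] {G C : Subgroup H}

theorem le_center [IsMulCommutative C] (hGC : IsCentralProduct G C) :
    C ≤ Subgroup.center H := by
  intro c hc
  refine Subgroup.mem_center_iff.2 fun h => ?_
  obtain ⟨g, hg, d, hd, rfl⟩ := hGC.exists_mul_eq h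
  exact (hGC.commute g hg c hc).mul_left (setLike_mul_comm hd hc)

theorem mem_center_of_coe_mem (hGC : IsCentralProduct G C) {z : G} (hz : (z : H) ∈ C) :
    z ∈ Subgroup.center G :=
  Subgroup.mem_center_iff.2 fun g => Subtype.ext (hGC.commute g g.2 z hz)

theorem exists_monoidHom_extending (hGC : IsCentralProduct G C) {M : Type*} [Monoid M]
    (φ : G →* M) (ψ : C →* M) (hcomm : ∀ g c, Commute (φ g) (ψ c))
    (hagree : ∀ (z : H) (hzG : z ∈ G) (hzC : z ∈ C), φ ⟨z, hzG⟩ = ψ ⟨z, hzC⟩) :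
    ∃ σ : H →* M, ∀ (g : G) (c : C), σ (g * c) = φ g * ψ c := by
  let mulHom : G × C →* H :=
    G.subtype.noncommCoprod C.subtype fun g c => hGC.commute g g.2 c c.2
  have hsurj : Function.Surjective mulHom := fun h => by
    obtain ⟨g, hg, c, hc, rfl⟩ := hGC.exists_mul_eq h
    exact ⟨(⟨g, hg⟩, ⟨c, hc⟩), rfl⟩
  have hker : Con.ker mulHom ≤ Con.ker (φ.noncommCoprod ψ hcomm) := by
    rintro ⟨g, c⟩ ⟨g', c'⟩ (h : (g * c : H) = g' * c')
    have hz : ((g'⁻¹ * g : G) : H) = (c' * c⁻¹ : C) := by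
      push_cast
      rw [inv_mul_eq_iff_eq_mul, ← mul_assoc, ← h, mul_inv_cancel_right]
    have hφψ : φ (g'⁻¹ * g) = ψ (c' * c⁻¹) :=
      (hagree _ (g'⁻¹ * g).2 (hz ▸ (c' * c⁻¹).2)).trans (congrArg ψ (Subtype.ext hz))
    change φ g * ψ c = φ g' * ψ c'
    calc φ g * ψ c = φ g' * φ (g'⁻¹ * g) * ψ c := by rw [← map_mul, mul_inv_cancel_left]
      _ = φ g' * ψ c' := by rw [hφψ, mul_assoc, ← map_mul, inv_mul_cancel_right]
  let e := Con.quotientKerEquivOfSurjective mulHom hsurj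
  refine ⟨((Con.ker mulHom).lift _ hker).comp e.symm.toMonoidHom, fun g c => ?_⟩
  have he : e.symm (g * c) = ((g, c) : G × C) := e.symm_apply_eq.2 rfl
  simp [he]

theorem isIrreducible_comp_subtype_iff (hGC : IsCentralProduct G C) {k V : Type*} [Field k]
    [AddCommGroup V] [Module k V] (σ : Representation k H V)
    (hσ : ∀ c : C, ∃ a : k, σ c = a • 1) :
    Representation.IsIrreducible (σ.comp G.subtype : Representation k G V) ↔ σ.IsIrreducible := by
  refine (subrepresentationCompOrderIso σ G.subtype fun h => ?_).isSimpleOrder_iff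
  obtain ⟨g, hg, c, hc, rfl⟩ := hGC.exists_mul_eq h
  obtain ⟨a, ha⟩ := hσ ⟨c, hc⟩
  exact ⟨⟨g, hg⟩, a, by rw [map_mul, ha, mul_smul_comm, mul_one, Subgroup.subtype_apply]⟩

theorem exists_linear_character [IsMulCommutative C] (hGC : IsCentralProduct G C) {k V : Type*}
    [Field k] [IsAlgClosed k] [AddCommGroup V] [Module k V] [FiniteDimensional k V]
    (σ : Representation k H V) [σ.IsIrreducible] :
    ∃ μ : C →* kˣ, ∀ c : C, σ c = (μ c : k) • 1 := by
  obtain ⟨ω, hω⟩ := exists_central_character σ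
  exact ⟨ω.comp (Subgroup.inclusion hGC.le_center),
    fun c => hω (Subgroup.inclusion hGC.le_center c)⟩

end IsCentralProduct

/-- `μ` lies over the central character of `χ`: the two restrict to multiples of the same linear
character of `G ∩ C`. -/
def AgreesOnInter {H : Type*} [Group H] {G C : Subgroup H} (χ : G → ℂ) (μ : C →* ℂˣ) : Prop :=
  ∀ (z : H) (hzG : z ∈ G) (hzC : z ∈ C), χ ⟨z, hzG⟩ = χ 1 * μ ⟨z, hzC⟩

theorem AgreesOnInter.agreesOnInter_iff {H : Type*} [Group H] {G C : Subgroup H} {χ : G → ℂ}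
    {μ μ₀ : C →* ℂˣ} (hμ₀ : AgreesOnInter χ μ₀) (hχ : χ 1 ≠ 0) :
    AgreesOnInter χ μ ↔ ∀ z ∈ (G ⊓ C).subgroupOf C, μ z = μ₀ z := by
  constructor
  · intro hμ z hz
    exact Units.ext (mul_left_cancel₀ hχ ((hμ z hz.1 z.2).symm.trans (hμ₀ z hz.1 z.2)))
  · intro h z hzG hzC
    rw [h ⟨z, hzC⟩ ⟨hzG, hzC⟩, hμ₀ z hzG hzC]

/-- `θ` is the dot product `χ • μ` of a class function `χ` of `G` and a linear character `μ`
of `C`. -/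
def IsDotProduct {H : Type*} [Group H] {G C : Subgroup H} (θ : H → ℂ) (χ : G → ℂ)
    (μ : C →* ℂˣ) : Prop :=
  ∀ (g : G) (c : C), θ (g * c) = χ g * μ c

namespace IsDotProduct

variable {H : Type*} [Group H] {G C : Subgroup H} {θ θ' : H → ℂ} {χ : G → ℂ} {μ μ' : C →* ℂˣ}

theorem apply_left (h : IsDotProduct θ χ μ) (g : G) : θ g = χ g := by
  simpa using h g 1

theorem apply_right (h : IsDotProduct θ χ μ) (c : C) : θ c = χ 1 * μ c := by
  simpa using h 1 c

theorem agreesOnInter (h : IsDotProduct θ χ μ) : AgreesOnInter χ μ := fun z hzG hzC =>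
  (h.apply_left ⟨z, hzG⟩).symm.trans (h.apply_right ⟨z, hzC⟩)

theorem left_unique (hGC : IsCentralProduct G C) (h : IsDotProduct θ χ μ)
    (h' : IsDotProduct θ' χ μ) : θ = θ' := by
  funext x
  obtain ⟨g, hg, c, hc, rfl⟩ := hGC.exists_mul_eq x
  exact (h ⟨g, hg⟩ ⟨c, hc⟩).trans (h' ⟨g, hg⟩ ⟨c, hc⟩).symm

theorem right_unique (hχ : χ 1 ≠ 0) (h : IsDotProduct θ χ μ) (h' : IsDotProduct θ χ μ') :
    μ = μ' :=
  MonoidHom.ext fun c => Units.ext <| mul_left_cancel₀ hχ <|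
    (h.apply_right c).symm.trans (h'.apply_right c)

theorem comp (h : IsDotProduct θ χ μ) {τ : H →* H} (hτG : Set.MapsTo τ G G)
    (hτC : Set.MapsTo τ C C) :
    IsDotProduct (θ ∘ τ) (χ ∘ τ.restrict hτG) (μ.comp (τ.restrict hτC)) := fun g c =>
  (congrArg θ (map_mul τ (g : H) c)).trans (h (τ.restrict hτG g) (τ.restrict hτC c))

theorem comp_eq_self_iff (hGC : IsCentralProduct G C) (h : IsDotProduct θ χ μ) {τ : H →* H}
    (hτG : Set.MapsTo τ G G) (hτC : Set.MapsTo τ C C) (hχ : χ 1 ≠ 0)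
    (hχτ : χ ∘ τ.restrict hτG = χ) : θ ∘ τ = θ ↔ μ.comp (τ.restrict hτC) = μ := by
  have hτ : IsDotProduct (θ ∘ τ) χ (μ.comp (τ.restrict hτC)) := hχτ ▸ h.comp hτG hτC
  constructor <;> intro heq
  · exact right_unique hχ (heq ▸ hτ) h
  · exact left_unique hGC (heq ▸ hτ) h

end IsDotProduct

section CentralProduct

variable {H : Type} [Group H] {G C : Subgroup H}

theorem exists_mem_irrChar_isDotProduct [Finite H] (hGC : IsCentralProduct G C) {χ : G → ℂ}
    (hχ : χ ∈ IrrChar G) {μ : C →* ℂˣ} (hμ : AgreesOnInter χ μ) :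
    ∃ θ ∈ IrrChar H, IsDotProduct θ χ μ := by
  obtain ⟨V, _, _, _, ρ, hρ, rfl⟩ := mem_irrChar_iff.1 hχ
  let ψ : C →* Module.End ℂ V :=
    (algebraMap ℂ (Module.End ℂ V) : ℂ →* _).comp ((Units.coeHom ℂ).comp μ)
  have hψ (c : C) : ψ c = (μ c : ℂ) • 1 :=
    Algebra.algebraMap_eq_smul_one (A := Module.End ℂ V) (μ c : ℂ)
  have hagree (z : H) (hzG : z ∈ G) (hzC : z ∈ C) : ρ ⟨z, hzG⟩ = ψ ⟨z, hzC⟩ := by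
    rw [hψ]
    exact map_eq_smul_one_of_character_eq ρ (hGC.mem_center_of_coe_mem hzC) (hμ z hzG hzC)
  obtain ⟨(σ : Representation ℂ H V), hσ⟩ := hGC.exists_monoidHom_extending ρ ψ
    (fun g c => (Algebra.commutes (μ c : ℂ) (ρ g)).symm) hagree
  have hσG : (σ.comp G.subtype : Representation ℂ G V) = ρ :=
    MonoidHom.ext fun g => by simpa using hσ g 1
  have hσC (c : C) : σ c = (μ c : ℂ) • 1 := by simpa [hψ] using hσ 1 c
  have : σ.IsIrreducible :=
    (hGC.isIrreducible_comp_subtype_iff σ fun c => ⟨μ c, hσC c⟩).1 (hσG.symm ▸ hρ)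
  refine ⟨σ.character, mem_irrChar_iff.2 ⟨V, _, _, inferInstance, σ, this, rfl⟩, fun g c => ?_⟩
  simp only [Representation.character, hσ, hψ, mul_smul_comm, mul_one, map_smul, smul_eq_mul,
    mul_comm]

theorem restrict_mem_irrChar [Finite H] [IsMulCommutative C] (hGC : IsCentralProduct G C)
    {θ : H → ℂ} (hθ : θ ∈ IrrChar H) : (fun g : G => θ g) ∈ IrrChar G := by
  obtain ⟨V, _, _, _, σ, hσ, rfl⟩ := mem_irrChar_iff.1 hθ
  obtain ⟨μ, hμ⟩ := hGC.exists_linear_character σ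
  have hres := (hGC.isIrreducible_comp_subtype_iff σ fun c => ⟨μ c, hμ c⟩).2 hσ
  exact mem_irrChar_iff.2 ⟨V, _, _, inferInstance, _, hres, rfl⟩

theorem exists_isDotProduct_restrict [Finite H] [IsMulCommutative C] (hGC : IsCentralProduct G C)
    {θ : H → ℂ} (hθ : θ ∈ IrrChar H) :
    ∃ μ : C →* ℂˣ, IsDotProduct θ (fun g : G => θ g) μ := by
  obtain ⟨V, _, _, _, σ, hσ, rfl⟩ := mem_irrChar_iff.1 hθ
  obtain ⟨μ, hμ⟩ := hGC.exists_linear_character σ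
  refine ⟨μ, fun g c => ?_⟩
  simp only [Representation.character, map_mul, hμ, mul_smul_comm, mul_one, map_smul, smul_eq_mul,
    mul_comm]

theorem card_invariant_irrChar_over_eq [Finite H] [Fintype G] [IsMulCommutative C]
    (hGC : IsCentralProduct G C) {τ : H →* H} (hτG : Set.MapsTo τ G G) (hτC : Set.MapsTo τ C C)
    {χ : G → ℂ} (hχ : χ ∈ IrrChar G) (hχτ : χ ∘ τ.restrict hτG = χ) :
    Nat.card {θ : H → ℂ // θ ∈ IrrChar H ∧ ∑ g : G, θ g * (starRingEnd ℂ) (χ g) ≠ 0 ∧ θ ∘ τ = θ} =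
      Nat.card {μ : C →* ℂˣ // AgreesOnInter χ μ ∧ μ.comp (τ.restrict hτC) = μ} := by
  have hχ1 := apply_one_ne_zero_of_mem_irrChar hχ
  have linear_part (θ : {θ : H → ℂ // θ ∈ IrrChar H ∧
      ∑ g : G, θ g * (starRingEnd ℂ) (χ g) ≠ 0 ∧ θ ∘ τ = θ}) :
      ∃ μ : {μ : C →* ℂˣ // AgreesOnInter χ μ ∧ μ.comp (τ.restrict hτC) = μ},
        IsDotProduct θ.1 χ μ.1 := by
    obtain ⟨θ, hθ, hover, hθτ⟩ := θ
    obtain ⟨μ, hμ⟩ := exists_isDotProduct_restrict hGC hθ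
    rw [(sum_mul_conj_ne_zero_iff (restrict_mem_irrChar hGC hθ) hχ).1 hover] at hμ
    exact ⟨⟨μ, hμ.agreesOnInter, (hμ.comp_eq_self_iff hGC hτG hτC hχ1 hχτ).1 hθτ⟩, hμ⟩
  choose μ hμ using linear_part
  refine Nat.card_congr (Equiv.ofBijective μ ⟨fun θ θ' h => ?_, fun ⟨μ', hagree, hμ'τ⟩ => ?_⟩)
  · exact Subtype.ext ((hμ θ).left_unique hGC (h ▸ hμ θ'))
  · obtain ⟨θ, hθ, hdot⟩ := exists_mem_irrChar_isDotProduct hGC hχ hagree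
    have hres : (fun g : G => θ g) = χ := funext hdot.apply_left
    refine ⟨⟨θ, hθ, ?_, ?_⟩, ?_⟩
    · exact (sum_mul_conj_ne_zero_iff (hres ▸ hχ) hχ).2 hres
    · exact (hdot.comp_eq_self_iff hGC hτG hτC hχ1 hχτ).2 hμ'τ
    · exact Subtype.ext ((hμ _).right_unique hχ1 hdot)

end CentralProduct

section FixedPoints

theorem card_monoidHom_comp_eq_self {A M : Type*} [CommGroup A] [Finite A] [CommMonoid M]
    [HasEnoughRootsOfUnity M (Monoid.exponent A)] (f : A →* A) :
    Nat.card {ξ : A →* Mˣ // ξ.comp f = ξ} = Nat.card {x : A // f x = x} := by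
  let δ : A →* A := f / .id A
  have hfixed (x : A) : f x = x ↔ x ∈ δ.ker := by
    simp [δ, MonoidHom.mem_ker, div_eq_one]
  have hinvariant (ξ : A →* Mˣ) : ξ.comp f = ξ ↔ (QuotientGroup.mk' δ.range).ker ≤ ξ.ker := by
    simp [MonoidHom.ext_iff, SetLike.le_def, δ, MonoidHom.mem_ker, div_eq_one]
  have : HasEnoughRootsOfUnity M (Monoid.exponent (A ⧸ δ.range)) :=
    .of_dvd M (Group.exponent_quotient_dvd ..)
  calc Nat.card {ξ : A →* Mˣ // ξ.comp f = ξ}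
      = Nat.card (A ⧸ δ.range →* Mˣ) := Nat.card_congr <|
        (Equiv.subtypeEquivRight hinvariant).trans <|
          (QuotientGroup.mk' δ.range).liftOfSurjective (QuotientGroup.mk'_surjective _)
    _ = Nat.card (A ⧸ δ.range) := CommGroup.card_monoidHom_of_hasEnoughRootsOfUnity _ M
    _ = Nat.card δ.ker := Subgroup.index_range
    _ = Nat.card {x : A // f x = x} := Nat.card_congr (Equiv.subtypeEquivRight hfixed).symm

theorem card_invariant_extensions_eq {A U : Type*} [Group A] [CommGroup U] {Z : Subgroup A}
    [Z.Normal] {t : A →* A} (ht : Z ≤ Z.comap t) {μ₀ : A →* U} (hμ₀ : μ₀.comp t = μ₀) :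
    Nat.card {μ : A →* U // (∀ z ∈ Z, μ z = μ₀ z) ∧ μ.comp t = μ} =
      Nat.card {ξ : A ⧸ Z →* U // ξ.comp (QuotientGroup.map Z Z t ht) = ξ} := by
  symm
  refine Nat.card_congr (Equiv.ofBijective (fun ξ => ⟨μ₀ * ξ.1.comp (QuotientGroup.mk' Z),
    fun z hz => ?_, ?_⟩) ⟨fun ξ ξ' h => ?_, fun ⟨μ, hμZ, hμt⟩ => ?_⟩)
  · simp [(QuotientGroup.eq_one_iff z).2 hz]
  · rw [MonoidHom.mul_comp, hμ₀]
    nth_rw 2 [← ξ.2]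
    rfl
  · exact Subtype.ext (QuotientGroup.monoidHom_ext Z (mul_left_cancel (congrArg Subtype.val h)))
  · have hker : Z ≤ (μ / μ₀).ker := fun z hz => by simp [MonoidHom.mem_ker, hμZ z hz]
    refine ⟨⟨QuotientGroup.lift Z (μ / μ₀) hker, QuotientGroup.monoidHom_ext Z ?_⟩, ?_⟩
    · change (μ / μ₀).comp t = μ / μ₀
      rw [MonoidHom.div_comp, hμt, hμ₀]
    · exact Subtype.ext (mul_div_cancel μ₀ μ)

theorem quotientGroup_map_eq_self_iff {A : Type*} [Group A] {Z : Subgroup A} [Z.Normal]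
    {t : A →* A} (ht : Z ≤ Z.comap t) (x : A ⧸ Z) :
    QuotientGroup.map Z Z t ht x = x ↔
      ∃ a : A, x = QuotientGroup.mk a ∧ (QuotientGroup.mk (t a) : A ⧸ Z) = x := by
  constructor
  · intro hx
    obtain ⟨a, rfl⟩ := QuotientGroup.mk_surjective x
    exact ⟨a, rfl, hx⟩
  · rintro ⟨a, rfl, ha⟩
    exact ha

end FixedPoints

open scoped IsMulCommutative in
theorem statement13_general {H : Type} [Group H] [Finite H] (G C : Subgroup H) [Fintype G]
    (hcentral : ∀ g ∈ G, ∀ c ∈ C, g * c = c * g) (hgen : ∀ h : H, ∃ g ∈ G, ∃ c ∈ C, h = g * c)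
    (hCab : ∀ x ∈ C, ∀ y ∈ C, x * y = y * x)
    (τ : H →* H) (hτG : ∀ g ∈ G, τ g ∈ G) (hτC : ∀ c ∈ C, τ c ∈ C)
    (χ : G → ℂ) (hχ : χ ∈ IrrChar G) (hχτ : ∀ g : G, χ ⟨τ g, hτG g g.2⟩ = χ g)
    (ν : ↥(G ⊓ C) →* ℂ)
    (hν : ∀ z : ↥(G ⊓ C), χ ⟨z, (Subgroup.mem_inf.mp z.2).1⟩ = χ 1 * ν z)
    (hext : ∃ νC : C →* ℂ,
      (∀ z : ↥(G ⊓ C), νC ⟨z, (Subgroup.mem_inf.mp z.2).2⟩ = ν z) ∧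
      ∀ c : C, νC ⟨τ c, hτC c c.2⟩ = νC c) :
    Nat.card {θ : H → ℂ // θ ∈ IrrChar H ∧ ∑ g : G, θ g * (starRingEnd ℂ) (χ g) ≠ 0 ∧
        ∀ h, θ (τ h) = θ h} =
      Nat.card {x : C ⧸ (G ⊓ C).subgroupOf C // ∃ c : C,
        x = QuotientGroup.mk c ∧
        (QuotientGroup.mk (⟨τ c, hτC c c.2⟩ : C) : C ⧸ (G ⊓ C).subgroupOf C) = x} := by
  have hGC : IsCentralProduct G C := ⟨hcentral, fun h => by simpa only [eq_comm] using hgen h⟩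
  have : IsMulCommutative C := isMulCommutative_iff_of_setLike.2 hCab
  obtain ⟨νC, hνC, hνCτ⟩ := hext
  let Z := (G ⊓ C).subgroupOf C
  let τC : C →* C := τ.restrict hτC
  have hZ : Z ≤ Z.comap τC := fun z hz => ⟨hτG z hz.1, hτC z hz.2⟩
  let μ₀ : C →* ℂˣ := νC.toHomUnits
  have hμ₀ : AgreesOnInter χ μ₀ := fun z hzG hzC =>
    (hν ⟨z, hzG, hzC⟩).trans (congrArg (χ 1 * ·) (hνC ⟨z, hzG, hzC⟩).symm)
  have hμ₀τ : μ₀.comp τC = μ₀ := MonoidHom.ext fun c => Units.ext (hνCτ c)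
  calc _ = Nat.card {μ : C →* ℂˣ // AgreesOnInter χ μ ∧ μ.comp τC = μ} := by
        simpa only [funext_iff, Function.comp_apply] using
          card_invariant_irrChar_over_eq hGC hτG hτC hχ (funext hχτ)
    _ = Nat.card {μ : C →* ℂˣ // (∀ z ∈ Z, μ z = μ₀ z) ∧ μ.comp τC = μ} := by
        simp only [hμ₀.agreesOnInter_iff (apply_one_ne_zero_of_mem_irrChar hχ), Z]
    _ = Nat.card {ξ : C ⧸ Z →* ℂˣ // ξ.comp (QuotientGroup.map Z Z τC hZ) = ξ} :=
        card_invariant_extensions_eq hZ hμ₀τ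
    _ = Nat.card {x : C ⧸ Z // QuotientGroup.map Z Z τC hZ x = x} :=
        card_monoidHom_comp_eq_self _
    _ = _ := Nat.card_congr (Equiv.subtypeEquivRight (quotientGroup_map_eq_self_iff hZ))

/-- Let `H = GC` be a finite central product with `Z = G ∩ C`, `C` abelian,
and `τ` an automorphism of `H` stabilizing `G` and `C`. Let `χ` be a `τ`-invariant irreducible
character of `G` with central character `ν` on `Z` (`Res_Z χ = χ(1)·ν`). If `ν` extends to a
`τ`-invariant linear character of `C`, then the number of `τ`-invariant irreducible characters
of `H` lying over `χ` equals the number of `τ`-fixed elements of `C/Z`. -/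
theorem statement13
    (H : Type) [Group H] [Fintype H]
    (G C : Subgroup H) [Fintype ↥G]
    -- central product: every element of `G` commutes with every element of `C`, `H = GC`
    (hcentral : ∀ g ∈ G, ∀ c ∈ C, g * c = c * g)
    (hgen : ∀ h : H, ∃ g ∈ G, ∃ c ∈ C, h = g * c)
    -- `C` is abelian
    (hCab : ∀ x ∈ C, ∀ y ∈ C, x * y = y * x)
    -- the automorphism `τ`, stabilizing `G` and `C`
    (τ : H ≃* H) (hτG : ∀ g ∈ G, τ g ∈ G) (hτC : ∀ c ∈ C, τ c ∈ C)
    -- a `τ`-invariant irreducible character `χ` of `G`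
    (χ : ↥G → ℂ) (hχ : χ ∈ IrrChar ↥G)
    (hχτ : ∀ g : ↥G, χ ⟨τ g, hτG g g.2⟩ = χ g)
    -- the central character `ν` of `χ` on `Z = G ⊓ C`
    (ν : ↥(G ⊓ C) →* ℂ)
    (hν : ∀ z : ↥(G ⊓ C), χ ⟨(z : H), (Subgroup.mem_inf.mp z.2).1⟩ = χ 1 * ν z)
    -- `ν` extends to a `τ`-invariant linear character of `C`
    (hext : ∃ νC : ↥C →* ℂ,
      (∀ z : ↥(G ⊓ C), νC ⟨(z : H), (Subgroup.mem_inf.mp z.2).2⟩ = ν z) ∧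
      (∀ c : ↥C, νC ⟨τ c, hτC c c.2⟩ = νC c)) :
    Nat.card {θ : H → ℂ // θ ∈ IrrChar H ∧
        (∑ g : ↥G, θ (g : H) * (starRingEnd ℂ) (χ g)) ≠ 0 ∧
        (∀ h : H, θ (τ h) = θ h)} =
    Nat.card {x : ↥C ⧸ (G ⊓ C).subgroupOf C // ∃ c : ↥C,
        x = QuotientGroup.mk c ∧
        (QuotientGroup.mk (⟨τ c, hτC c c.2⟩ : ↥C) :
          ↥C ⧸ (G ⊓ C).subgroupOf C) = x} := by
  exact statement13_general G C hcentral hgen hCab τ.toMonoidHom hτG hτC χ hχ hχτ ν hν hext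
end
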